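/- Let π be a continuous piecewise linear minimal valid function (its breakpoints need not be rational). Then π is extreme if and only if π is a facet. -/

import Mathlib

/-- A finite-support function `y : ℝ → ℕ` is feasible if `∑ r, r·y(r) − f ∈ ℤ`. -/
def Feasible (f : ℝ) (y : ℝ →₀ ℕ) : Prop :=
  ∃ z : ℤ, (∑ r ∈ y.support, r * (y r : ℝ)) - f = (z : ℝ)

/-- `π` is a valid function: nonnegative, and `∑ r, π(r)·y(r) ≥ 1` for every feasible `y`. -/
def Valid (f : ℝ) (π : ℝ → ℝ) : Prop :=
  (∀ x, 0 ≤ π x) ∧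
    ∀ y : ℝ →₀ ℕ, Feasible f y → 1 ≤ ∑ r ∈ y.support, π r * (y r : ℝ)

/-- A valid function is minimal if no other valid function is pointwise ≤ it. -/
def MinimalValid (f : ℝ) (π : ℝ → ℝ) : Prop :=
  Valid f π ∧ ¬ ∃ π' : ℝ → ℝ, Valid f π' ∧ (∀ x, π' x ≤ π x) ∧ π' ≠ π

/-- `P(π)`: the set of feasible `y` with `∑ r, π(r)·y(r) = 1`. -/
def Pset (f : ℝ) (π : ℝ → ℝ) : Set (ℝ →₀ ℕ) :=
  {y | Feasible f y ∧ ∑ r ∈ y.support, π r * (y r : ℝ) = 1}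

/-- `E(π) = {(x,y) : π(x) + π(y) = π(x+y)}`. -/
def Eset (π : ℝ → ℝ) : Set (ℝ × ℝ) :=
  {p | π p.1 + π p.2 = π (p.1 + p.2)}

/-- A valid function `π` is a facet if every valid `π'` with `P(π) ⊆ P(π')` equals `π`. -/
def IsFacet (f : ℝ) (π : ℝ → ℝ) : Prop :=
  Valid f π ∧ ∀ π' : ℝ → ℝ, Valid f π' → Pset f π ⊆ Pset f π' → π' = π

/-- A valid function `π` is a weak facet if every valid `π'` with `P(π) ⊆ P(π')`
has `P(π) = P(π')`. -/
def IsWeakFacet (f : ℝ) (π : ℝ → ℝ) : Prop :=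
  Valid f π ∧ ∀ π' : ℝ → ℝ, Valid f π' → Pset f π ⊆ Pset f π' → Pset f π = Pset f π'

/-- A valid function `π` is extreme if whenever `π = (π¹ + π²)/2` with `π¹, π²` valid,
then `π¹ = π² = π`. -/
def ExtremeFunc (f : ℝ) (π : ℝ → ℝ) : Prop :=
  Valid f π ∧ ∀ π₁ π₂ : ℝ → ℝ, Valid f π₁ → Valid f π₂ →
    (∀ x, π x = (π₁ x + π₂ x) / 2) → π₁ = π ∧ π₂ = π

/-- `π` is piecewise linear: there is a closed, discrete set `B ⊆ ℝ` of breakpoints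
such that `π` is affine on each connected component of `ℝ \ B`. -/
def PiecewiseLinear (π : ℝ → ℝ) : Prop :=
  ∃ B : Set ℝ, IsClosed B ∧
    (∀ x ∈ B, ∃ ε > (0 : ℝ), ∀ y ∈ B, |y - x| < ε → y = x) ∧
    (∀ x ∉ B, ∃ a b : ℝ, ∀ z ∈ connectedComponentIn Bᶜ x, π z = a * z + b)

/-- `π` is continuous piecewise linear. -/
def ContPiecewiseLinear (π : ℝ → ℝ) : Prop :=
  PiecewiseLinear π ∧ Continuous π

/-!
If `P(π) ⊆ P(θ)`, then `θ` inherits from `π` symmetry, periodicity and subadditivity, and its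
subadditivity slack vanishes wherever that of `π` does. Near a zero the slack of `π` is linear on
each of six cones, so it dominates the distance to its zero set. Since `π` is additive on each side
of `0`, `θ` grows at most linearly there and is therefore Lipschitz, so the slack of `θ` is locally
dominated by that of `π`. Compactness modulo `ℤ²` makes the constant uniform. Hence both
`π + c (θ - π)` and `π - c (θ - π)` are valid for small `c > 0`, and extremality forces `θ = π`.
The slack at `(x, y)` is symmetric in the triple `x, y, z` with `x + y + z = f`, which reduces the
six cones to one.
-/

open Filter Topology Finsupp Asymptotics

section LinearCombination

variable {α : Type*} {g h : α → ℝ}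

lemma sum_mul_eq_linearCombination (g : α → ℝ) (y : α →₀ ℕ) :
    ∑ r ∈ y.support, g r * (y r : ℝ) = linearCombination ℕ g y := by
  simp only [linearCombination_apply, Finsupp.sum, nsmul_eq_mul, mul_comm]

lemma linearCombination_fun_add (g h : α → ℝ) (y : α →₀ ℕ) :
    linearCombination ℕ (g + h) y = linearCombination ℕ g y + linearCombination ℕ h y := by
  simp only [← bilinearCombination_apply (R := ℕ) (S := ℕ), map_add, LinearMap.add_apply]

lemma linearCombination_fun_smul (c : ℝ) (g : α → ℝ) (y : α →₀ ℕ) :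
    linearCombination ℕ (c • g) y = c * linearCombination ℕ g y := by
  simp only [← bilinearCombination_apply (R := ℕ) (S := ℝ), map_smul, LinearMap.smul_apply,
    smul_eq_mul]

lemma linearCombination_mono (hgh : g ≤ h) (y : α →₀ ℕ) :
    linearCombination ℕ g y ≤ linearCombination ℕ h y :=
  Finset.sum_le_sum fun r _ => nsmul_le_nsmul_right (hgh r) (y r)

lemma linearCombination_update [DecidableEq α] (g : α → ℝ) (z : α) (c : ℝ) (y : α →₀ ℕ) :
    linearCombination ℕ (Function.update g z c) y =
      y z • c + linearCombination ℕ g (y.erase z) := by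
  conv_lhs => rw [← single_add_erase z y, map_add, linearCombination_single,
    Function.update_self]
  congr 1
  refine Finset.sum_congr rfl fun r hr => ?_
  have hrz : r ≠ z := by
    rintro rfl
    simp at hr
  simp only [Function.update_of_ne hrz]

lemma linearCombination_eq_erase (g : α → ℝ) (z : α) (y : α →₀ ℕ) :
    linearCombination ℕ g y = y z • g z + linearCombination ℕ g (y.erase z) := by
  classical simpa using linearCombination_update g z (g z) y

end LinearCombination

section Subadditive

variable {M : Type*} [AddCommMonoid M] {ρ : M → ℝ}

lemma map_nsmul_le_of_subadditive (h0 : ρ 0 = 0) (hsub : ∀ x y, ρ (x + y) ≤ ρ x + ρ y)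
    (n : ℕ) (x : M) : ρ (n • x) ≤ n • ρ x := by
  simpa using Finset.le_sum_of_subadditive ρ h0.le hsub (Finset.range n) fun _ => x

lemma map_linearCombination_le_of_subadditive {α : Type*} (h0 : ρ 0 = 0)
    (hsub : ∀ x y, ρ (x + y) ≤ ρ x + ρ y) (v : α → M) (y : α →₀ ℕ) :
    ρ (linearCombination ℕ v y) ≤ linearCombination ℕ (ρ ∘ v) y :=
  (Finset.le_sum_of_subadditive ρ h0.le hsub _ _).trans <|
    Finset.sum_le_sum fun _ _ => map_nsmul_le_of_subadditive h0 hsub _ _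

lemma nonneg_of_subadditive_of_bddBelow (h0 : ρ 0 = 0)
    (hsub : ∀ x y, ρ (x + y) ≤ ρ x + ρ y) (hbdd : BddBelow (Set.range ρ)) (x : M) :
    0 ≤ ρ x := by
  obtain ⟨m, hm⟩ := hbdd
  by_contra! hx
  obtain ⟨n, hn⟩ := Archimedean.arch (1 - m) (neg_pos.2 hx)
  have hle := map_nsmul_le_of_subadditive h0 hsub n x
  have hge : m ≤ ρ (n • x) := hm ⟨n • x, rfl⟩
  rw [smul_neg] at hn
  linarith

end Subadditive

section Valid

variable {f : ℝ} {π π₁ π₂ : ℝ → ℝ} {y : ℝ →₀ ℕ}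

lemma feasible_iff : Feasible f y ↔ ∃ m : ℤ, linearCombination ℕ id y = f + m := by
  simp only [Feasible, ← sum_mul_eq_linearCombination, id, sub_eq_iff_eq_add']

lemma valid_iff :
    Valid f π ↔ (∀ x, 0 ≤ π x) ∧ ∀ y, Feasible f y → 1 ≤ linearCombination ℕ π y := by
  simp only [Valid, sum_mul_eq_linearCombination]

lemma mem_Pset_iff : y ∈ Pset f π ↔ Feasible f y ∧ linearCombination ℕ π y = 1 := by
  simp only [Pset, sum_mul_eq_linearCombination, Set.mem_ofPred_eq]

lemma feasible_pair {u v : ℝ} {m : ℤ} (h : u + v = f + m) :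
    Feasible f (single u 1 + single v 1) :=
  feasible_iff.2 ⟨m, by simpa using h⟩

lemma feasible_triple {u v w : ℝ} (h : u + v + w = f) :
    Feasible f (single u 1 + single v 1 + single w 1) :=
  feasible_iff.2 ⟨0, by simpa using h⟩

lemma Valid.one_le_pair (hπ : Valid f π) {u v : ℝ} (h : u + v = f) : 1 ≤ π u + π v := by
  simpa using (valid_iff.1 hπ).2 _ (feasible_pair (m := 0) (by simpa using h))

lemma Valid.one_le_triple (hπ : Valid f π) {u v w : ℝ} (h : u + v + w = f) :
    1 ≤ π u + π v + π w := by
  simpa using (valid_iff.1 hπ).2 _ (feasible_triple h)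

lemma Valid.mono (hπ₁ : Valid f π₁) (hle : π₁ ≤ π₂) : Valid f π₂ :=
  valid_iff.2 ⟨fun x => (hπ₁.1 x).trans (hle x), fun y hy =>
    ((valid_iff.1 hπ₁).2 y hy).trans (linearCombination_mono hle y)⟩

/-- The easy half of the Gomory–Johnson characterisation of minimal valid functions, with
nonnegativity weakened to boundedness. -/
lemma valid_of_subadditive (hbdd : BddBelow (Set.range π)) (h0 : π 0 = 0)
    (hsub : ∀ x y, π (x + y) ≤ π x + π y) (hper : Function.Periodic π 1) (hf : π f = 1) :
    Valid f π := by
  refine valid_iff.2 ⟨nonneg_of_subadditive_of_bddBelow h0 hsub hbdd, fun y hy => ?_⟩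
  obtain ⟨m, hm⟩ := feasible_iff.1 hy
  calc 1 = π (f + m) := by simpa [hf] using (hper.int_mul m f).symm
    _ = π (linearCombination ℕ id y) := by rw [hm]
    _ ≤ linearCombination ℕ π y := map_linearCombination_le_of_subadditive h0 hsub id y

lemma IsFacet.extremeFunc (h : IsFacet f π) : ExtremeFunc f π := by
  have left_eq : ∀ π₁ π₂ : ℝ → ℝ, Valid f π₁ → Valid f π₂ →
      (∀ x, π x = (π₁ x + π₂ x) / 2) → π₁ = π := by
    intro π₁ π₂ h₁ h₂ hmid
    refine h.2 π₁ h₁ fun y hy => ?_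
    obtain ⟨hy, hy1⟩ := mem_Pset_iff.1 hy
    have hsplit : (2 : ℝ) • π = π₁ + π₂ := by
      funext x
      simp only [hmid, Pi.add_apply, Pi.smul_apply, smul_eq_mul]
      ring
    have hsum := congrArg (linearCombination ℕ · y) hsplit
    simp only [linearCombination_fun_add, linearCombination_fun_smul, hy1] at hsum
    have := (valid_iff.1 h₁).2 y hy
    have := (valid_iff.1 h₂).2 y hy
    exact mem_Pset_iff.2 ⟨hy, by linarith⟩
  refine ⟨h.1, fun π₁ π₂ h₁ h₂ hmid => ⟨left_eq π₁ π₂ h₁ h₂ hmid, ?_⟩⟩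
  exact left_eq π₂ π₁ h₂ h₁ fun x => by rw [hmid, add_comm]

lemma ExtremeFunc.minimalValid (h : ExtremeFunc f π) : MinimalValid f π := by
  refine ⟨h.1, fun ⟨π', hπ', hle, hne⟩ => hne ?_⟩
  have hreflect : Valid f (fun x => 2 * π x - π' x) :=
    h.1.mono fun x => by linarith [hle x]
  exact (h.2 π' _ hπ' hreflect fun x => by ring).1

end Valid

/-- The properties that characterise minimal valid functions in the Gomory–Johnson theorem. -/
structure IsGomoryJohnson (f : ℝ) (π : ℝ → ℝ) : Prop where
  nonneg : ∀ x, 0 ≤ π x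
  map_zero : π 0 = 0
  periodic : Function.Periodic π 1
  subadd : ∀ x y, π (x + y) ≤ π x + π y
  symm : ∀ x, π x + π (f - x) = 1

namespace MinimalValid

variable {f : ℝ} {π : ℝ → ℝ}

lemma le_of_valid_update (hπ : MinimalValid f π) {z c : ℝ}
    (hc : Valid f (Function.update π z c)) : π z ≤ c := by
  by_contra! hlt
  refine hπ.2 ⟨_, hc, update_le_self_iff.2 hlt.le, fun heq => hlt.ne ?_⟩
  simpa using congrFun heq z

/-- Otherwise each use of `z` could be replaced by a copy of `w`, and `π z` be lowered. -/
lemma le_linearCombination (hπ : MinimalValid f π) {z : ℝ} {w : ℝ →₀ ℕ} {m : ℤ}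
    (hw : linearCombination ℕ id w = z + m) : π z ≤ linearCombination ℕ π w := by
  obtain ⟨hnonneg, hone⟩ := valid_iff.1 hπ.1
  refine hπ.le_of_valid_update (valid_iff.2 ⟨fun x => ?_, fun y hy => ?_⟩)
  · rcases eq_or_ne x z with rfl | hx
    · rw [Function.update_self]
      exact Finset.sum_nonneg fun r _ => nsmul_nonneg (hnonneg r) _
    · rw [Function.update_of_ne hx]
      exact hnonneg x
  · rw [linearCombination_update, ← map_nsmul, ← map_add]
    refine hone _ (feasible_iff.2 ?_)
    obtain ⟨k, hk⟩ := feasible_iff.1 hy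
    refine ⟨k + y z * m, ?_⟩
    rw [linearCombination_eq_erase id z y] at hk
    simp only [map_add, map_nsmul, hw, nsmul_eq_mul, id, Int.cast_add, Int.cast_mul,
      Int.cast_natCast] at hk ⊢
    linarith

lemma map_zero (hπ : MinimalValid f π) : π 0 = 0 :=
  le_antisymm (by simpa using hπ.le_linearCombination (z := 0) (w := 0) (m := 0) (by simp))
    (hπ.1.1 0)

lemma subadd (hπ : MinimalValid f π) (x y : ℝ) : π (x + y) ≤ π x + π y :=
  calc π (x + y) ≤ linearCombination ℕ π (single x 1 + single y 1) :=
        hπ.le_linearCombination (m := 0) (by simp)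
    _ = π x + π y := by simp

lemma periodic (hπ : MinimalValid f π) : Function.Periodic π 1 := fun x =>
  le_antisymm
    (by simpa using hπ.le_linearCombination (w := single x 1) (m := -1) (by simp))
    (by simpa using hπ.le_linearCombination (w := single (x + 1) 1) (m := 1) (by simp))

lemma add_map_sub_le_linearCombination (hπ : MinimalValid f π) {y : ℝ →₀ ℕ}
    (hy : Feasible f y) {x : ℝ} (hx : y x ≠ 0) :
    π x + π (f - x) ≤ linearCombination ℕ π y := by
  obtain ⟨k, hk⟩ := feasible_iff.1 hy
  obtain ⟨w, rfl⟩ : ∃ w, y = single x 1 + w :=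
    exists_add_of_le (single_le_iff.2 (Nat.one_le_iff_ne_zero.2 hx))
  have hw : linearCombination ℕ id w = f - x + k := by
    simp only [map_add, linearCombination_single, one_smul, id] at hk
    linarith
  simpa using hπ.le_linearCombination hw

/-- Dividing `π x` by `d = π x + π (f - x)` preserves validity, since every feasible `y` that
uses `x` costs at least `d`. -/
lemma valid_update_div (hπ : MinimalValid f π) (x : ℝ) :
    Valid f (Function.update π x (π x / (π x + π (f - x)))) := by
  set d := π x + π (f - x)
  have hd : 1 ≤ d := hπ.1.one_le_pair (add_sub_cancel x f)
  obtain ⟨hnonneg, hone⟩ := valid_iff.1 hπ.1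
  have hdiv : ∀ t, π t / d ≤ π t := fun t => div_le_self (hnonneg t) hd
  have hscale : d⁻¹ • π ≤ Function.update π x (π x / d) := by
    intro t
    rcases eq_or_ne t x with rfl | ht
    · simp [div_eq_inv_mul]
    · simpa [Function.update_of_ne ht, div_eq_inv_mul] using hdiv t
  refine valid_iff.2 ⟨fun t => ?_, fun y hy => ?_⟩
  · refine le_trans ?_ (hscale t)
    simpa using mul_nonneg (inv_nonneg.2 (zero_le_one.trans hd)) (hnonneg t)
  by_cases hyx : y x = 0
  · rw [linearCombination_update, hyx, zero_smul, zero_add,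
      erase_of_notMem_support (notMem_support_iff.2 hyx)]
    exact hone y hy
  · calc 1 = d⁻¹ * d := (inv_mul_cancel₀ (by positivity)).symm
      _ ≤ d⁻¹ * linearCombination ℕ π y := by
        gcongr
        exact hπ.add_map_sub_le_linearCombination hy hyx
      _ = linearCombination ℕ (d⁻¹ • π) y := (linearCombination_fun_smul _ _ _).symm
      _ ≤ _ := linearCombination_mono hscale y

lemma add_map_sub_le_one (hπ : MinimalValid f π) {x : ℝ} (hx : 0 < π x) :
    π x + π (f - x) ≤ 1 := by
  have hd : 1 ≤ π x + π (f - x) := hπ.1.one_le_pair (add_sub_cancel x f)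
  have hle := hπ.le_of_valid_update (hπ.valid_update_div x)
  rwa [le_div_iff₀ (by positivity), mul_le_iff_le_one_right hx] at hle

lemma symm (hπ : MinimalValid f π) (x : ℝ) : π x + π (f - x) = 1 := by
  have hge : 1 ≤ π x + π (f - x) := hπ.1.one_le_pair (add_sub_cancel x f)
  refine le_antisymm ?_ hge
  rcases (hπ.1.1 x).lt_or_eq with hx | hx
  · exact hπ.add_map_sub_le_one hx
  · have hfx : 0 < π (f - x) := by linarith
    simpa [add_comm] using hπ.add_map_sub_le_one hfx

lemma isGomoryJohnson (hπ : MinimalValid f π) : IsGomoryJohnson f π :=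
  ⟨hπ.1.1, hπ.map_zero, hπ.periodic, hπ.subadd, hπ.symm⟩

end MinimalValid

/-- For `ρ` symmetric about `f`, this is the subadditivity slack `ρ x + ρ y - ρ (x + y)` at
`p = (x, y)`. Writing it through `z = f - x - y` makes it symmetric in the triple `x, y, z`. -/
def excess (f : ℝ) (ρ : ℝ → ℝ) (p : ℝ × ℝ) : ℝ :=
  ρ p.1 + ρ p.2 + ρ (f - p.1 - p.2) - 1

section Excess

variable {f : ℝ} {π θ ρ : ℝ → ℝ} {p : ℝ × ℝ}

lemma Valid.excess_nonneg (hρ : Valid f ρ) (p : ℝ × ℝ) : 0 ≤ excess f ρ p :=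
  sub_nonneg.2 (hρ.one_le_triple (by ring))

lemma excess_eq_slack (hsymm : ∀ x, ρ x + ρ (f - x) = 1) (x y : ℝ) :
    excess f ρ (x, y) = ρ x + ρ y - ρ (x + y) := by
  have := hsymm (x + y)
  rw [← sub_sub] at this
  simp only [excess]
  linarith

lemma map_add_le_of_excess_nonneg (hsymm : ∀ x, ρ x + ρ (f - x) = 1)
    (hex : ∀ p, 0 ≤ excess f ρ p) (x y : ℝ) : ρ (x + y) ≤ ρ x + ρ y :=
  sub_nonneg.1 (excess_eq_slack hsymm x y ▸ hex (x, y))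

lemma IsGomoryJohnson.excess_nonneg (hρ : IsGomoryJohnson f ρ) (p : ℝ × ℝ) :
    0 ≤ excess f ρ p := by
  rw [← Prod.mk.eta (p := p), excess_eq_slack hρ.symm]
  exact sub_nonneg.2 (hρ.subadd _ _)

lemma IsGomoryJohnson.le_one (hρ : IsGomoryJohnson f ρ) (x : ℝ) : ρ x ≤ 1 := by
  linarith [hρ.symm x, hρ.nonneg (f - x)]

lemma excess_fract (hρ : Function.Periodic ρ 1) (p : ℝ × ℝ) :
    excess f ρ (Int.fract p.1, Int.fract p.2) = excess f ρ p := by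
  have hfract : ∀ x, ρ (Int.fract x) = ρ x := fun x => by
    simpa using hρ.sub_int_mul_eq (x := x) ⌊x⌋
  have hthird : ρ (f - Int.fract p.1 - Int.fract p.2) = ρ (f - p.1 - p.2) := by
    rw [← hρ.int_mul (⌊p.1⌋ + ⌊p.2⌋) (f - p.1 - p.2)]
    congr 1
    rw [← Int.self_sub_floor, ← Int.self_sub_floor, Int.cast_add]
    ring
  simp only [excess, hfract, hthird]

lemma continuous_excess (hρ : Continuous ρ) : Continuous (excess f ρ) := by
  unfold excess
  fun_prop

lemma excess_eq_zero_of_Pset_subset (hP : Pset f π ⊆ Pset f θ) (hp : excess f π p = 0) :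
    excess f θ p = 0 := by
  have hfeas : Feasible f (single p.1 1 + single p.2 1 + single (f - p.1 - p.2) 1) :=
    feasible_triple (by ring)
  have hmem := hP (mem_Pset_iff.2 ⟨hfeas, by simpa using sub_eq_zero.1 hp⟩)
  exact sub_eq_zero.2 (by simpa using (mem_Pset_iff.1 hmem).2)

lemma IsGomoryJohnson.of_Pset_subset (hπ : IsGomoryJohnson f π) (hθ : Valid f θ)
    (hP : Pset f π ⊆ Pset f θ) : IsGomoryJohnson f θ := by
  have hpair : ∀ u v (m : ℤ), u + v = f + m → π u + π v = 1 → θ u + θ v = 1 := by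
    intro u v m huv h
    have hmem := hP (mem_Pset_iff.2 ⟨feasible_pair huv, by simpa using h⟩)
    simpa using (mem_Pset_iff.1 hmem).2
  have hsymm : ∀ x, θ x + θ (f - x) = 1 := fun x =>
    hpair x (f - x) 0 (by simp) (hπ.symm x)
  have hshift : ∀ x, θ (x + 1) + θ (f - x) = 1 := fun x =>
    hpair (x + 1) (f - x) 1 (by push_cast; ring) (by rw [hπ.periodic, hπ.symm])
  refine ⟨hθ.1, ?_, fun x => by linarith [hsymm x, hshift x],
    map_add_le_of_excess_nonneg hsymm hθ.excess_nonneg, hsymm⟩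
  have hex : excess f θ (0, 0) = 0 :=
    excess_eq_zero_of_Pset_subset hP (by simp [excess_eq_slack hπ.symm, hπ.map_zero])
  simpa [excess_eq_slack hsymm] using hex

lemma valid_of_excess_nonneg (hbdd : BddBelow (Set.range ρ)) (h0 : ρ 0 = 0)
    (hper : Function.Periodic ρ 1) (hsymm : ∀ x, ρ x + ρ (f - x) = 1)
    (hex : ∀ p, 0 ≤ excess f ρ p) : Valid f ρ :=
  valid_of_subadditive hbdd h0 (map_add_le_of_excess_nonneg hsymm hex) hper
    (by simpa [h0] using hsymm f)

end Excess

section Growth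

/-- Doubling `t` until it exceeds `ε / 2` reduces the bound to the trivial range. -/
lemma le_mul_of_two_mul_le {g : ℝ → ℝ} {ε M : ℝ} (hε : 0 < ε) (hM : 0 ≤ M)
    (hbdd : ∀ t, g t ≤ M) (hdouble : ∀ t, 0 ≤ t → 2 * t ≤ ε → 2 * g t ≤ g (2 * t))
    {t : ℝ} (ht : 0 ≤ t) : g t ≤ 2 * M / ε * t := by
  have hfar : ∀ t, ε ≤ 2 * t → g t ≤ 2 * M / ε * t := fun t ht =>
    calc g t ≤ M := hbdd t
      _ = M / ε * ε := (div_mul_cancel₀ M hε.ne').symm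
      _ ≤ M / ε * (2 * t) := by gcongr
      _ = 2 * M / ε * t := by ring
  have hnear : ∀ n : ℕ, ∀ t, 0 ≤ t → ε ≤ 2 ^ n * (2 * t) → g t ≤ 2 * M / ε * t := by
    intro n
    induction n with
    | zero => exact fun t _ hn => hfar t (by simpa using hn)
    | succ n ih =>
      intro t ht hn
      rcases le_total ε (2 * t) with hlt | hle
      · exact hfar t hlt
      · have hrec := ih (2 * t) (by positivity) (by rw [pow_succ] at hn; linarith)
        linarith [hdouble t ht hle]
  rcases ht.eq_or_lt with rfl | ht
  · have h0 := hdouble 0 le_rfl (by simpa using hε.le)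
    rw [mul_zero] at h0 ⊢
    linarith
  · obtain ⟨n, hn⟩ := pow_unbounded_of_one_lt (ε / (2 * t)) one_lt_two
    exact hnear n t ht.le ((div_lt_iff₀ (by positivity)).1 hn).le

end Growth

section PiecewiseLinear

variable {π : ℝ → ℝ}

lemma PiecewiseLinear.exists_affine_on_Ioo (hπ : PiecewiseLinear π) (x : ℝ) {v : ℝ}
    (hv : v ≠ 0) : ∃ δ > 0, ∃ a b, ∀ t ∈ Set.Ioo 0 δ, π (x + t * v) = a * (x + t * v) + b := by
  obtain ⟨B, hclosed, hdiscrete, haffine⟩ := hπ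
  have hisolated : ∀ᶠ y in 𝓝 x, y ∈ B → y = x := by
    by_cases hx : x ∈ B
    · obtain ⟨ε, hε, h⟩ := hdiscrete x hx
      filter_upwards [Metric.ball_mem_nhds x hε] with y hy hyB using h y hyB hy
    · filter_upwards [hclosed.isOpen_compl.mem_nhds hx] with y hy hyB using absurd hyB hy
  have hray : ∀ᶠ t in 𝓝[≥] (0 : ℝ), x + t * v ∈ B → x + t * v = x := by
    have hcont : Tendsto (fun t : ℝ => x + t * v) (𝓝 0) (𝓝 x) := by
      simpa using (show Continuous fun t : ℝ => x + t * v by fun_prop).tendsto 0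
    exact (hcont.eventually hisolated).filter_mono nhdsWithin_le_nhds
  obtain ⟨δ, hδ, hδB⟩ := mem_nhdsGE_iff_exists_Icc_subset.1 hray
  set S := (fun t => x + t * v) '' Set.Ioo 0 δ
  have hSB : S ⊆ Bᶜ := by
    rintro _ ⟨t, ht, rfl⟩ hB
    have := hδB (Set.Ioo_subset_Icc_self ht) hB
    simp [ht.1.ne', hv] at this
  have hSconn : IsPreconnected S := isPreconnected_Ioo.image _ (by fun_prop)
  have hmid : x + δ / 2 * v ∈ S := ⟨δ / 2, ⟨half_pos hδ, half_lt_self hδ⟩, rfl⟩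
  obtain ⟨a, b, hab⟩ := haffine _ (hSB hmid)
  exact ⟨δ, hδ, a, b, fun t ht =>
    hab _ (hSconn.subset_connectedComponentIn hmid hSB ⟨t, ht, rfl⟩)⟩

lemma ContPiecewiseLinear.exists_slope (hπ : ContPiecewiseLinear π) (x v : ℝ) :
    ∃ s, ∀ᶠ t in 𝓝[≥] (0 : ℝ), π (x + t * v) = π x + s * t := by
  rcases eq_or_ne v 0 with rfl | hv
  · exact ⟨0, by simp⟩
  obtain ⟨δ, hδ, a, b, hab⟩ := hπ.1.exists_affine_on_Ioo x hv
  have hclosure : Set.EqOn (fun t => π (x + t * v)) (fun t => a * (x + t * v) + b)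
      (Set.Icc 0 δ) := by
    have hcont := hπ.2
    rw [← closure_Ioo hδ.ne]
    exact Set.EqOn.closure hab (by fun_prop) (by fun_prop)
  have h0 := hclosure (Set.left_mem_Icc.2 hδ.le)
  refine ⟨a * v, ?_⟩
  filter_upwards [Icc_mem_nhdsGE hδ] with t ht
  have := hclosure ht
  simp only [zero_mul, add_zero] at this h0
  linarith

end PiecewiseLinear

section LocalDomination

variable {f : ℝ} {π θ : ℝ → ℝ}

lemma exists_le_mul_of_slope_at_zero (hcpl : ContPiecewiseLinear π) (hπ : IsGomoryJohnson f π)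
    (hθ : IsGomoryJohnson f θ) (hzero : ∀ p, excess f π p = 0 → excess f θ p = 0) (σ : ℝ) :
    ∃ L ≥ 0, ∀ t ≥ 0, θ (t * σ) ≤ L * t := by
  obtain ⟨s, hs⟩ := hcpl.exists_slope 0 σ
  obtain ⟨ε, hε, hlin⟩ := mem_nhdsGE_iff_exists_Icc_subset.1 hs
  replace hε : 0 < ε := hε
  have hdouble : ∀ t, 0 ≤ t → 2 * t ≤ ε → 2 * θ (t * σ) ≤ θ (2 * t * σ) := by
    intro t ht htε
    have hπt := hlin ⟨ht, by linarith⟩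
    have hπ2t := hlin ⟨by positivity, htε⟩
    simp only [Set.mem_ofPred_eq, zero_add, hπ.map_zero] at hπt hπ2t
    have hadd : t * σ + t * σ = 2 * t * σ := by ring
    have hθt := hzero (t * σ, t * σ) (by rw [excess_eq_slack hπ.symm, hadd]; linarith)
    rw [excess_eq_slack hθ.symm, hadd] at hθt
    linarith
  exact ⟨2 * 1 / ε, by positivity, fun t ht =>
    le_mul_of_two_mul_le hε zero_le_one (fun t => hθ.le_one _) hdouble ht⟩

lemma exists_le_mul_abs (hcpl : ContPiecewiseLinear π) (hπ : IsGomoryJohnson f π)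
    (hθ : IsGomoryJohnson f θ) (hzero : ∀ p, excess f π p = 0 → excess f θ p = 0) :
    ∃ L ≥ 0, ∀ t, θ t ≤ L * |t| := by
  obtain ⟨L₁, hL₁, hright⟩ := exists_le_mul_of_slope_at_zero hcpl hπ hθ hzero 1
  obtain ⟨L₂, hL₂, hleft⟩ := exists_le_mul_of_slope_at_zero hcpl hπ hθ hzero (-1)
  refine ⟨L₁ + L₂, by positivity, fun t => ?_⟩
  have hL₁t : 0 ≤ L₁ * |t| := by positivity
  have hL₂t : 0 ≤ L₂ * |t| := by positivity
  rw [add_mul]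
  rcases abs_choice t with ht | ht
  · have := hright |t| (abs_nonneg t)
    rw [mul_one] at this
    nth_rw 1 [← ht]
    linarith
  · have := hleft |t| (abs_nonneg t)
    nth_rw 1 [← neg_eq_iff_eq_neg.2 ht, ← mul_neg_one]
    linarith

lemma excess_le_add {L : ℝ} (hL : 0 ≤ L) (hsub : ∀ x y, θ (x + y) ≤ θ x + θ y)
    (hgrowth : ∀ t, θ t ≤ L * |t|) (p d : ℝ × ℝ) :
    excess f θ (p + d) ≤ excess f θ p + 2 * L * (|d.1| + |d.2|) := by
  have hshift : ∀ x t, θ (x + t) ≤ θ x + L * |t| := fun x t =>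
    (hsub x t).trans (by gcongr; exact hgrowth t)
  have hthird : θ (f - (p.1 + d.1) - (p.2 + d.2)) ≤
      θ (f - p.1 - p.2) + L * (|d.1| + |d.2|) :=
    calc θ (f - (p.1 + d.1) - (p.2 + d.2)) = θ (f - p.1 - p.2 + -(d.1 + d.2)) := by ring_nf
      _ ≤ θ (f - p.1 - p.2) + L * |-(d.1 + d.2)| := hshift _ _
      _ ≤ θ (f - p.1 - p.2) + L * (|d.1| + |d.2|) := by
        rw [abs_neg]
        gcongr
        exact abs_add_le _ _
  simp only [excess, Prod.fst_add, Prod.snd_add]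
  linarith [hshift p.1 d.1, hshift p.2 d.2]

lemma ContPiecewiseLinear.exists_excess_eq_linear (hcpl : ContPiecewiseLinear π) (p : ℝ × ℝ)
    (σ : ℝ) : ∃ α β, ∃ ε > 0, ∀ w : ℝ × ℝ, 0 ≤ w → w.1 + w.2 ≤ ε →
      excess f π (p + σ • w) = excess f π p + (α * w.1 + β * w.2) := by
  obtain ⟨a, ha⟩ := hcpl.exists_slope p.1 σ
  obtain ⟨b, hb⟩ := hcpl.exists_slope p.2 σ
  obtain ⟨c, hc⟩ := hcpl.exists_slope (f - p.1 - p.2) (-σ)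
  obtain ⟨ε, hε, hlin⟩ := mem_nhdsGE_iff_exists_Icc_subset.1 (ha.and (hb.and hc))
  refine ⟨a + c, b + c, ε, hε, fun w hw hwε => ?_⟩
  have hw₁ : 0 ≤ w.1 := hw.1
  have hw₂ : 0 ≤ w.2 := hw.2
  have hx := (hlin ⟨hw₁, by linarith⟩).1
  have hy := (hlin ⟨hw₂, by linarith⟩).2.1
  have hz := (hlin ⟨add_nonneg hw₁ hw₂, hwε⟩).2.2
  have hthird : f - (p.1 + σ * w.1) - (p.2 + σ * w.2) =
      f - p.1 - p.2 + (w.1 + w.2) * -σ := by ring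
  simp only [excess, Prod.fst_add, Prod.snd_add, Prod.smul_fst, Prod.smul_snd, smul_eq_mul]
  rw [hthird, mul_comm σ, mul_comm σ, hx, hy, hz]
  ring

lemma exists_excess_eq_linear_of_zero (hcpl : ContPiecewiseLinear π)
    (hπ : IsGomoryJohnson f π) {p : ℝ × ℝ} (hp : excess f π p = 0) (σ : ℝ) :
    ∃ α ≥ 0, ∃ β ≥ 0, ∃ ε > 0, ∀ w : ℝ × ℝ, 0 ≤ w → w.1 + w.2 ≤ ε →
      excess f π (p + σ • w) = α * w.1 + β * w.2 := by
  obtain ⟨α, β, ε, hε, hlin⟩ := hcpl.exists_excess_eq_linear (f := f) p σ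
  simp only [hp, zero_add] at hlin
  have hα : 0 ≤ α := by
    have := hlin (ε, 0) ⟨hε.le, le_rfl⟩ (by simp)
    have hnonneg := hπ.excess_nonneg (p + σ • (ε, 0))
    rw [this, mul_zero, add_zero] at hnonneg
    exact nonneg_of_mul_nonneg_left hnonneg hε
  have hβ : 0 ≤ β := by
    have := hlin (0, ε) ⟨le_rfl, hε.le⟩ (by simp)
    have hnonneg := hπ.excess_nonneg (p + σ • (0, ε))
    rw [this, mul_zero, zero_add] at hnonneg
    exact nonneg_of_mul_nonneg_left hnonneg hε
  exact ⟨α, hα, β, hβ, ε, hε, hlin⟩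

lemma exists_zero_of_linear_nonneg {α β : ℝ} (hα : 0 ≤ α) (hβ : 0 ≤ β) {w : ℝ × ℝ}
    (hw : 0 ≤ w) : ∃ w₀ ∈ Set.Icc 0 w, α * w₀.1 + β * w₀.2 = 0 ∧
      (w - w₀).1 + (w - w₀).2 ≤ (α⁻¹ + β⁻¹) * (α * w.1 + β * w.2) := by
  have hw₁ : 0 ≤ w.1 := hw.1
  have hw₂ : 0 ≤ w.2 := hw.2
  -- As `0⁻¹ = 0`, the factor `1 - α⁻¹ * α` is `1` if `α = 0` and `0` otherwise.
  have hfactor : ∀ γ : ℝ, 0 ≤ 1 - γ⁻¹ * γ ∧ 1 - γ⁻¹ * γ ≤ 1 ∧ γ * (1 - γ⁻¹ * γ) = 0 := by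
    intro γ
    rcases eq_or_ne γ 0 with rfl | hγ
    · simp
    · simp [hγ]
  obtain ⟨hα0, hα1, hαz⟩ := hfactor α
  obtain ⟨hβ0, hβ1, hβz⟩ := hfactor β
  refine ⟨((1 - α⁻¹ * α) * w.1, (1 - β⁻¹ * β) * w.2),
    ⟨⟨mul_nonneg hα0 hw₁, mul_nonneg hβ0 hw₂⟩,
      mul_le_of_le_one_left hw₁ hα1, mul_le_of_le_one_left hw₂ hβ1⟩, ?_, ?_⟩
  · linear_combination w.1 * hαz + w.2 * hβz
  · have hαβ : 0 ≤ α⁻¹ * (β * w.2) := by positivity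
    have hβα : 0 ≤ β⁻¹ * (α * w.1) := by positivity
    simp only [Prod.fst_sub, Prod.snd_sub]
    linarith

lemma excess_isBigO_quadrant (hcpl : ContPiecewiseLinear π) (hπ : IsGomoryJohnson f π)
    (hθ : IsGomoryJohnson f θ) (hzero : ∀ p, excess f π p = 0 → excess f θ p = 0)
    {p : ℝ × ℝ} (hp : excess f π p = 0) (σ : ℝ) :
    (fun w : ℝ × ℝ => excess f θ (p + σ • w)) =O[𝓝[≥] 0] fun w => excess f π (p + σ • w) := by
  obtain ⟨L, hL, hgrowth⟩ := exists_le_mul_abs hcpl hπ hθ hzero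
  obtain ⟨α, hα, β, hβ, ε, hε, hlin⟩ := exists_excess_eq_linear_of_zero hcpl hπ hp σ
  have hsmall : ∀ᶠ w : ℝ × ℝ in 𝓝[≥] 0, w.1 + w.2 < ε :=
    nhdsWithin_le_nhds (IsOpen.mem_nhds (isOpen_lt (by fun_prop) (by fun_prop)) (by simpa))
  refine IsBigO.of_bound (2 * L * |σ| * (α⁻¹ + β⁻¹)) ?_
  filter_upwards [self_mem_nhdsWithin, hsmall] with w hw hwε
  obtain ⟨w₀, ⟨hw₀, hw₀w⟩, hw₀zero, hdist⟩ := exists_zero_of_linear_nonneg hα hβ hw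
  have hbase : excess f θ (p + σ • w₀) = 0 := by
    refine hzero _ ((hlin w₀ hw₀ ?_).trans hw₀zero)
    linarith [hw₀w.1, hw₀w.2]
  have hd : 0 ≤ w - w₀ := sub_nonneg.2 hw₀w
  rw [Real.norm_of_nonneg (hθ.excess_nonneg _), Real.norm_of_nonneg (hπ.excess_nonneg _)]
  calc excess f θ (p + σ • w) = excess f θ (p + σ • w₀ + σ • (w - w₀)) := by
        rw [add_assoc, ← smul_add, add_sub_cancel]
    _ ≤ 2 * L * (|σ * (w - w₀).1| + |σ * (w - w₀).2|) := by
        simpa only [hbase, zero_add, Prod.smul_fst, Prod.smul_snd, smul_eq_mul] using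
          excess_le_add (f := f) hL hθ.subadd hgrowth (p + σ • w₀) (σ • (w - w₀))
    _ = 2 * L * |σ| * ((w - w₀).1 + (w - w₀).2) := by
        rw [abs_mul, abs_mul, abs_of_nonneg hd.1, abs_of_nonneg hd.2]
        ring
    _ ≤ 2 * L * |σ| * ((α⁻¹ + β⁻¹) * (α * w.1 + β * w.2)) := by gcongr
    _ = _ := by rw [hlin w hw hwε.le]; ring

lemma excess_isBigO_nhdsWithin_comparable (hcpl : ContPiecewiseLinear π) (hπ : IsGomoryJohnson f π)
    (hθ : IsGomoryJohnson f θ) (hzero : ∀ p, excess f π p = 0 → excess f θ p = 0)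
    {p : ℝ × ℝ} (hp : excess f π p = 0) :
    excess f θ =O[𝓝[Set.Ici p ∪ Set.Iic p] p] excess f π := by
  have hcone := excess_isBigO_quadrant hcpl hπ hθ hzero hp
  have hup : Tendsto (fun q => q - p) (𝓝[≥] p) (𝓝[≥] 0) := by
    simpa using ContinuousWithinAt.tendsto_nhdsWithin
      (show ContinuousWithinAt (fun q => q - p) (Set.Ici p) p by fun_prop)
      (t := Set.Ici 0) fun q hq => sub_nonneg.2 hq
  have hdown : Tendsto (fun q => p - q) (𝓝[≤] p) (𝓝[≥] 0) := by
    simpa using ContinuousWithinAt.tendsto_nhdsWithin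
      (show ContinuousWithinAt (fun q => p - q) (Set.Iic p) p by fun_prop)
      (t := Set.Ici 0) fun q hq => sub_nonneg.2 hq
  rw [nhdsWithin_union]
  refine IsBigO.sup ?_ ?_
  · simpa [Function.comp_def] using (hcone 1).comp_tendsto hup
  · simpa [Function.comp_def] using (hcone (-1)).comp_tendsto hdown

end LocalDomination

section Rotate

/-- With `x + y + z = f`, the point `(x, y)` stands for the triple `(x, y, z)`, and this is the
cyclic shift to `(y, z, x)`. -/
def rotate (f : ℝ) (p : ℝ × ℝ) : ℝ × ℝ :=
  (p.2, f - p.1 - p.2)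

variable {f : ℝ} {π θ : ℝ → ℝ}

lemma excess_rotate (ρ : ℝ → ℝ) (p : ℝ × ℝ) : excess f ρ (rotate f p) = excess f ρ p := by
  simp only [excess, rotate, show f - p.2 - (f - p.1 - p.2) = p.1 by ring]
  ring

lemma continuous_rotate : Continuous (rotate f) := by
  unfold rotate
  fun_prop

lemma excess_isBigO_of_rotate {p : ℝ × ℝ} {s : Set (ℝ × ℝ)}
    (h : excess f θ =O[𝓝[s] (rotate f p)] excess f π) :
    excess f θ =O[𝓝[rotate f ⁻¹' s] p] excess f π := by
  simpa only [Function.comp_def, excess_rotate] using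
    h.comp_tendsto (continuous_rotate.continuousWithinAt.tendsto_nhdsWithin
      (Set.mapsTo_preimage (rotate f) s))

/-- Among three increments with sum zero, two have the same sign. -/
lemma comparable_union_rotate_eq_univ (p : ℝ × ℝ) :
    Set.Ici p ∪ Set.Iic p ∪
      rotate f ⁻¹' (Set.Ici (rotate f p) ∪ Set.Iic (rotate f p)) ∪
      rotate f ⁻¹' (rotate f ⁻¹' (Set.Ici (rotate f (rotate f p)) ∪
        Set.Iic (rotate f (rotate f p)))) = Set.univ := by
  refine Set.eq_univ_of_forall fun q => ?_
  simp only [Set.mem_union, Set.mem_preimage, Set.mem_Ici, Set.mem_Iic, Prod.le_def, rotate]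
  grind

end Rotate

section Compactness

lemma isBigO_principal_of_isCompact {X E F : Type*} [TopologicalSpace X]
    [SeminormedAddCommGroup E] [SeminormedAddCommGroup F] {K : Set X} (hK : IsCompact K)
    {φ : X → E} {ψ : X → F} (h : ∀ x ∈ K, φ =O[𝓝[K] x] ψ) : φ =O[𝓟 K] ψ := by
  refine hK.induction_on (p := fun s => φ =O[𝓟 s] ψ) ?_ ?_ ?_ ?_
  · simp
  · exact fun s t hst ht => ht.mono (principal_mono.2 hst)
  · exact fun s t hs ht => by simpa using hs.sup ht
  · intro x hx
    obtain ⟨c, hc⟩ := (h x hx).bound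
    exact ⟨_, hc, IsBigO.of_bound c (eventually_principal.2 fun y hy => hy)⟩

end Compactness

section GlobalDomination

variable {f : ℝ} {π θ : ℝ → ℝ}

lemma excess_isBigO_nhds_of_zero (hcpl : ContPiecewiseLinear π) (hπ : IsGomoryJohnson f π)
    (hθ : IsGomoryJohnson f θ) (hzero : ∀ p, excess f π p = 0 → excess f θ p = 0)
    {p : ℝ × ℝ} (hp : excess f π p = 0) : excess f θ =O[𝓝 p] excess f π := by
  have hcone : ∀ q, excess f π q = 0 →
      excess f θ =O[𝓝[Set.Ici q ∪ Set.Iic q] q] excess f π :=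
    fun q hq => excess_isBigO_nhdsWithin_comparable hcpl hπ hθ hzero hq
  have hp₁ : excess f π (rotate f p) = 0 := by rwa [excess_rotate]
  have hp₂ : excess f π (rotate f (rotate f p)) = 0 := by rwa [excess_rotate]
  rw [← nhdsWithin_univ, ← comparable_union_rotate_eq_univ (f := f), nhdsWithin_union,
    nhdsWithin_union]
  exact ((hcone p hp).sup (excess_isBigO_of_rotate (hcone _ hp₁))).sup
    (excess_isBigO_of_rotate (excess_isBigO_of_rotate (hcone _ hp₂)))

lemma excess_isBigO_nhds_of_ne_zero (hπ : Continuous π) (hθ : IsGomoryJohnson f θ)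
    {p : ℝ × ℝ} (hp : excess f π p ≠ 0) : excess f θ =O[𝓝 p] excess f π := by
  have hbounded : excess f θ =O[𝓝 p] fun _ => (1 : ℝ) := by
    refine IsBigO.of_bound 2 (Eventually.of_forall fun q => ?_)
    rw [Real.norm_of_nonneg (hθ.excess_nonneg q), norm_one, mul_one]
    simp only [excess]
    linarith [hθ.le_one q.1, hθ.le_one q.2, hθ.le_one (f - q.1 - q.2)]
  have hlimit : (fun _ => excess f π p) =O[𝓝 p] excess f π :=
    ((isEquivalent_const_iff_tendsto hp).2 ((continuous_excess hπ).tendsto p)).isBigO_symm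
  exact (hbounded.trans (isBigO_const_const _ hp _)).trans hlimit

lemma exists_excess_le_mul (hcpl : ContPiecewiseLinear π) (hπ : IsGomoryJohnson f π)
    (hθ : IsGomoryJohnson f θ) (hzero : ∀ p, excess f π p = 0 → excess f θ p = 0) :
    ∃ C > 0, ∀ p, excess f θ p ≤ C * excess f π p := by
  have hlocal : ∀ p, excess f θ =O[𝓝 p] excess f π := fun p =>
    (eq_or_ne (excess f π p) 0).elim (excess_isBigO_nhds_of_zero hcpl hπ hθ hzero)
      (excess_isBigO_nhds_of_ne_zero hcpl.2 hθ)
  have hsquare : excess f θ =O[𝓟 (Set.Icc (0 : ℝ × ℝ) 1)] excess f π :=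
    isBigO_principal_of_isCompact isCompact_Icc fun p _ => (hlocal p).mono nhdsWithin_le_nhds
  obtain ⟨C, hC, hbound⟩ := hsquare.exists_pos
  refine ⟨C, hC, fun p => ?_⟩
  have hfract : (Int.fract p.1, Int.fract p.2) ∈ Set.Icc (0 : ℝ × ℝ) 1 :=
    ⟨⟨Int.fract_nonneg _, Int.fract_nonneg _⟩, (Int.fract_lt_one _).le, (Int.fract_lt_one _).le⟩
  have hle := isBigOWith_principal.1 hbound _ hfract
  rwa [Real.norm_of_nonneg (hθ.excess_nonneg _), Real.norm_of_nonneg (hπ.excess_nonneg _),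
    excess_fract hθ.periodic, excess_fract hπ.periodic] at hle

end GlobalDomination

section Perturbation

variable {f : ℝ} {π θ : ℝ → ℝ}

lemma excess_lineMap (t : ℝ) (p : ℝ × ℝ) :
    excess f (AffineMap.lineMap π θ t) p =
      AffineMap.lineMap (excess f π p) (excess f θ p) t := by
  simp only [excess, AffineMap.lineMap_apply_module, Pi.add_apply, Pi.smul_apply, smul_eq_mul]
  ring

lemma valid_lineMap (hπ : IsGomoryJohnson f π) (hθ : IsGomoryJohnson f θ) {t : ℝ}
    (hex : ∀ p, 0 ≤ excess f (AffineMap.lineMap π θ t) p) :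
    Valid f (AffineMap.lineMap π θ t) := by
  have happly : ∀ x, AffineMap.lineMap π θ t x = (1 - t) * π x + t * θ x := fun x => by
    simp [AffineMap.lineMap_apply_module]
  refine valid_of_excess_nonneg ⟨-(|1 - t| + |t|), ?_⟩ ?_ (fun x => ?_) (fun x => ?_) hex
  · rintro _ ⟨x, rfl⟩
    have hbound : ∀ {c u : ℝ}, 0 ≤ u → u ≤ 1 → -|c| ≤ c * u := fun {c u} h0 h1 =>
      calc -|c| ≤ -|c| * u := by nlinarith [abs_nonneg c]
        _ ≤ c * u := by gcongr; exact neg_abs_le c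
    rw [happly]
    linarith [hbound (c := 1 - t) (hπ.nonneg x) (hπ.le_one x),
      hbound (c := t) (hθ.nonneg x) (hθ.le_one x)]
  · rw [happly, hπ.map_zero, hθ.map_zero]
    ring
  · rw [happly, happly, hπ.periodic, hθ.periodic]
  · rw [happly, happly]
    linear_combination (1 - t) * hπ.symm x + t * hθ.symm x

lemma exists_valid_perturbation (hcpl : ContPiecewiseLinear π) (hπ : IsGomoryJohnson f π)
    (hθ : IsGomoryJohnson f θ) (hzero : ∀ p, excess f π p = 0 → excess f θ p = 0) :
    ∃ c > (0 : ℝ), Valid f (AffineMap.lineMap π θ c) ∧ Valid f (AffineMap.lineMap π θ (-c)) := by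
  obtain ⟨C, hC, hdom⟩ := exists_excess_le_mul hcpl hπ hθ hzero
  refine ⟨(1 + C)⁻¹, by positivity, valid_lineMap hπ hθ fun p => ?_,
    valid_lineMap hπ hθ fun p => ?_⟩
  all_goals
    have hπp := hπ.excess_nonneg p
    have hθp := hθ.excess_nonneg p
    rw [excess_lineMap, AffineMap.lineMap_apply_module, smul_eq_mul, smul_eq_mul]
  · have hle : 0 ≤ 1 - (1 + C)⁻¹ := sub_nonneg.2 (inv_le_one_of_one_le₀ (by linarith))
    positivity
  · have hdomp : 0 ≤ C * excess f π p - excess f θ p := sub_nonneg.2 (hdom p)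
    calc 0 ≤ (1 + C)⁻¹ * (2 * excess f π p + (C * excess f π p - excess f θ p)) := by positivity
      _ = (1 - -(1 + C)⁻¹) * excess f π p + -(1 + C)⁻¹ * excess f θ p := by
        field_simp
        ring

lemma ExtremeFunc.isFacet (h : ExtremeFunc f π) (hcpl : ContPiecewiseLinear π) :
    IsFacet f π := by
  refine ⟨h.1, fun θ hθvalid hP => ?_⟩
  have hπ := h.minimalValid.isGomoryJohnson
  have hθ := hπ.of_Pset_subset hθvalid hP
  obtain ⟨c, hc, hplus, hminus⟩ :=
    exists_valid_perturbation hcpl hπ hθ fun p => excess_eq_zero_of_Pset_subset hP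
  have hfix : AffineMap.lineMap π θ c = π := by
    refine (h.2 _ _ hplus hminus fun x => ?_).1
    simp only [AffineMap.lineMap_apply_module, Pi.add_apply, Pi.smul_apply]
    ring
  exact (AffineMap.lineMap_eq_left_iff.1 hfix).resolve_right hc.ne' |>.symm

end Perturbation

theorem stmt3_general {f : ℝ} {π : ℝ → ℝ} (hcpl : ContPiecewiseLinear π) :
    ExtremeFunc f π ↔ IsFacet f π :=
  ⟨fun h => h.isFacet hcpl, IsFacet.extremeFunc⟩

theorem stmt3 (f : ℝ) (hf : f ∈ Set.Ioo (0 : ℝ) 1) (π : ℝ → ℝ)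
    (hπ : MinimalValid f π) (hcpl : ContPiecewiseLinear π) :
    ExtremeFunc f π ↔ IsFacet f π := by
  exact stmt3_general hcpl
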